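/- Let x_s ∈ ℝ and x_q ≠ 0. If x > 0 is a critical point of g₀₀, i.e. g₀₀'(x) = 0, then the second derivative there equals g₀₀''(x) = 4·x_q²·(1 − x²/√(1 + x⁴)) and is strictly positive; hence every critical point of g₀₀ on (0,∞) is a strict local minimum. -/

import Mathlib

/-!
Put `h y = y² g₀₀'(y)`. Differentiating, with `s = √(y⁴+1)` and `I y = ∫_y^∞ dt/√(t⁴+1)`,
gives `h y = x_s + (4/3) x_q² (y³ - y s - I y)` and then
`h' y = 4 x_q² y² (1 - y²/s)`, which is positive on `(0,∞)` because `y² < s`.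
At a critical point `x` the quotient rule for `g₀₀' = h / y²` leaves only `h' x / x²`, which is the
claimed second derivative. Moreover `h` is strictly increasing on `(0,∞)`, so `g₀₀'` is negative
on `(0,x)` and positive on `(x,∞)`; thus `x` is a strict minimum on all of `(0,∞)`,
and `ε = x` works.
-/

open Real MeasureTheory

/-- The metric function `f` of the Einstein-Born-Infeld black hole. -/
noncomputable def f (x : ℝ) : ℝ :=
  (2 / 3) * (x ^ 4 - x ^ 2 * Real.sqrt (x ^ 4 + 1))
    + (4 / 3) * x * ∫ t in Set.Ioi x, 1 / Real.sqrt (t ^ 4 + 1)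

/-- The time-time metric component `g₀₀(x) = 1 - x_s/x + (x_q^2/x^2) * f x`
of the Einstein-Born-Infeld black hole, in dimensionless variables. -/
noncomputable def g₀₀ (xs xq : ℝ) (x : ℝ) : ℝ :=
  1 - xs / x + (xq ^ 2 / x ^ 2) * f x

lemma integrable_inv_sqrt_quartic :
    Integrable (fun t : ℝ => 1 / Real.sqrt (t ^ 4 + 1)) := by
  refine (integrable_inv_one_add_sq.const_mul 2).mono' ?_ (Filter.Eventually.of_forall fun t => ?_)
  · exact Measurable.aestronglyMeasurable (by fun_prop)
  · have h0 : 0 < Real.sqrt (t ^ 4 + 1) := Real.sqrt_pos.2 (by positivity)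
    rw [Real.norm_of_nonneg (by positivity), ← div_eq_mul_inv,
      div_le_div_iff₀ h0 (by positivity)]
    -- `(1 + t²)² ≤ 4 (t⁴ + 1)`
    have h1 : Real.sqrt (t ^ 4 + 1) ^ 2 = t ^ 4 + 1 := Real.sq_sqrt (by positivity)
    nlinarith [sq_nonneg (t ^ 2 - 1)]

lemma hasDerivAt_tail (y : ℝ) :
    HasDerivAt (fun y : ℝ => ∫ t in Set.Ioi y, 1 / Real.sqrt (t ^ 4 + 1))
      (-(1 / Real.sqrt (y ^ 4 + 1))) y := by
  have hc : Continuous (fun t : ℝ => 1 / Real.sqrt (t ^ 4 + 1)) := by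
    refine continuous_const.div (by fun_prop) fun t => ?_
    exact (Real.sqrt_pos.2 (by positivity)).ne'
  have heq : (fun y : ℝ => ∫ t in Set.Ioi y, 1 / Real.sqrt (t ^ 4 + 1)) = fun y : ℝ =>
      (∫ t in Set.Ioi (0 : ℝ), 1 / Real.sqrt (t ^ 4 + 1))
        - ∫ t in (0 : ℝ)..y, 1 / Real.sqrt (t ^ 4 + 1) := by
    funext z
    rw [← intervalIntegral.integral_Ioi_sub_Ioi' integrable_inv_sqrt_quartic.integrableOn
      integrable_inv_sqrt_quartic.integrableOn]
    ring
  rw [heq]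
  exact (hc.integral_hasStrictDerivAt 0 y).hasDerivAt.const_sub _

lemma hasDerivAt_sqrt_quartic (y : ℝ) :
    HasDerivAt (fun y : ℝ => Real.sqrt (y ^ 4 + 1)) (2 * y ^ 3 / Real.sqrt (y ^ 4 + 1)) y := by
  have h := ((hasDerivAt_pow 4 y).add_const (1 : ℝ)).sqrt (by positivity)
  refine h.congr_deriv ?_
  have h0 : 0 < Real.sqrt (y ^ 4 + 1) := Real.sqrt_pos.2 (by positivity)
  field_simp
  norm_num

/-- The function `y² g₀₀'(y)`, in closed form. -/
noncomputable def flux (xs xq y : ℝ) : ℝ :=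
  xs + 4 / 3 * xq ^ 2 * (y ^ 3 - y * Real.sqrt (y ^ 4 + 1)
    - ∫ t in Set.Ioi y, 1 / Real.sqrt (t ^ 4 + 1))

lemma hasDerivAt_flux (xs xq y : ℝ) :
    HasDerivAt (flux xs xq) (4 * xq ^ 2 * y ^ 2 * (1 - y ^ 2 / Real.sqrt (1 + y ^ 4))) y := by
  have h := (((((hasDerivAt_pow 3 y).sub ((hasDerivAt_id y).mul (hasDerivAt_sqrt_quartic y))).sub
    (hasDerivAt_tail y)).const_mul (4 / 3 * xq ^ 2)).const_add xs)
  refine h.congr_deriv ?_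
  have h0 : 0 < Real.sqrt (y ^ 4 + 1) := Real.sqrt_pos.2 (by positivity)
  have h1 : Real.sqrt (y ^ 4 + 1) ^ 2 = y ^ 4 + 1 := Real.sq_sqrt (by positivity)
  rw [add_comm 1 (y ^ 4)]
  simp only [id]
  field_simp
  norm_num
  linear_combination (-xq ^ 2) * h1

lemma hasDerivAt_g₀₀ (xs xq : ℝ) {y : ℝ} (hy : 0 < y) :
    HasDerivAt (g₀₀ xs xq) (flux xs xq y / y ^ 2) y := by
  have hf : HasDerivAt f _ y :=
    ((((hasDerivAt_pow 4 y).sub ((hasDerivAt_pow 2 y).mul (hasDerivAt_sqrt_quartic y))).const_mul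
      (2 / 3)).add (((hasDerivAt_id y).const_mul (4 / 3)).mul (hasDerivAt_tail y)))
  have h : HasDerivAt (g₀₀ xs xq) _ y :=
    (((hasDerivAt_const y xs).div (hasDerivAt_id y) hy.ne').const_sub 1).add
      (((hasDerivAt_const y (xq ^ 2)).div (hasDerivAt_pow 2 y) (by positivity)).mul hf)
  refine h.congr_deriv ?_
  have h0 : 0 < Real.sqrt (y ^ 4 + 1) := Real.sqrt_pos.2 (by positivity)
  have h1 : Real.sqrt (y ^ 4 + 1) ^ 2 = y ^ 4 + 1 := Real.sq_sqrt (by positivity)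
  simp only [f, flux, id, Pi.div_apply]
  generalize (∫ t in Set.Ioi y, 1 / Real.sqrt (t ^ 4 + 1)) = J
  generalize Real.sqrt (y ^ 4 + 1) = s at *
  field_simp
  norm_num
  linear_combination (4 * y ^ 2 * xq ^ 2) * h1

lemma one_sub_div_sqrt_pos (y : ℝ) : 0 < 1 - y ^ 2 / Real.sqrt (1 + y ^ 4) := by
  have h0 : 0 < Real.sqrt (1 + y ^ 4) := Real.sqrt_pos.2 (by positivity)
  rw [sub_pos, div_lt_one h0]
  exact Real.lt_sqrt_of_sq_lt (by nlinarith)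

lemma flux_strictMonoOn (xs xq : ℝ) (hq : xq ≠ 0) : StrictMonoOn (flux xs xq) (Set.Ioi 0) := by
  refine strictMonoOn_of_deriv_pos (convex_Ioi 0)
    (fun y _ => (hasDerivAt_flux xs xq y).continuousAt.continuousWithinAt) fun y hy => ?_
  rw [interior_Ioi] at hy
  have hy' : 0 < y := hy
  rw [(hasDerivAt_flux xs xq y).deriv]
  have := one_sub_div_sqrt_pos y
  positivity

/-- If `x_q ≠ 0` and `x > 0` is a critical point of `g₀₀`, then the second derivative
there equals `4*x_q^2*(1 - x^2/sqrt(1+x^4))`, is strictly positive, and the critical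
point is a strict local minimum. -/
theorem critical_point_strict_local_min (xs xq : ℝ) (hq : xq ≠ 0) (x : ℝ) (hx : 0 < x)
    (hcrit : deriv (g₀₀ xs xq) x = 0) :
    deriv (deriv (g₀₀ xs xq)) x = 4 * xq ^ 2 * (1 - x ^ 2 / Real.sqrt (1 + x ^ 4)) ∧
    0 < deriv (deriv (g₀₀ xs xq)) x ∧
    ∃ ε > (0 : ℝ), ∀ y : ℝ, |y - x| < ε → y ≠ x → g₀₀ xs xq x < g₀₀ xs xq y := by
  have hflux : flux xs xq x = 0 := by
    rw [(hasDerivAt_g₀₀ xs xq hx).deriv] at hcrit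
    simpa [hx.ne'] using hcrit
  have hmono := flux_strictMonoOn xs xq hq
  have hpos := one_sub_div_sqrt_pos x
  have hsecond : deriv (deriv (g₀₀ xs xq)) x
      = 4 * xq ^ 2 * (1 - x ^ 2 / Real.sqrt (1 + x ^ 4)) := by
    have heq : deriv (g₀₀ xs xq) =ᶠ[nhds x] fun y => flux xs xq y / y ^ 2 := by
      filter_upwards [Ioi_mem_nhds hx] with y hy
      exact (hasDerivAt_g₀₀ xs xq hy).deriv
    rw [heq.deriv_eq, ((hasDerivAt_flux xs xq x).fun_div (hasDerivAt_pow 2 x) (by positivity)).deriv,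
      hflux]
    generalize 1 - x ^ 2 / Real.sqrt (1 + x ^ 4) = c
    field_simp
    ring
  refine ⟨hsecond, by rw [hsecond]; positivity, x, hx, fun y hy hne => ?_⟩
  have hy0 : 0 < y := by linarith [(abs_lt.1 hy).1]
  have hcont : ContinuousOn (g₀₀ xs xq) (Set.Ioi 0) := fun z hz =>
    (hasDerivAt_g₀₀ xs xq hz).continuousAt.continuousWithinAt
  rcases lt_or_gt_of_ne hne with hlt | hgt
  · have hanti : StrictAntiOn (g₀₀ xs xq) (Set.Icc y x) := by
      refine strictAntiOn_of_deriv_neg (convex_Icc y x)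
        (hcont.mono fun z hz => hy0.trans_le hz.1) fun z hz => ?_
      rw [interior_Icc] at hz
      have hz0 : 0 < z := hy0.trans hz.1
      rw [(hasDerivAt_g₀₀ xs xq hz0).deriv]
      exact div_neg_of_neg_of_pos (hflux ▸ hmono hz0 hx hz.2) (by positivity)
    exact hanti (Set.left_mem_Icc.2 hlt.le) (Set.right_mem_Icc.2 hlt.le) hlt
  · have hinc : StrictMonoOn (g₀₀ xs xq) (Set.Icc x y) := by
      refine strictMonoOn_of_deriv_pos (convex_Icc x y)
        (hcont.mono fun z hz => hx.trans_le hz.1) fun z hz => ?_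
      rw [interior_Icc] at hz
      have hz0 : 0 < z := hx.trans hz.1
      rw [(hasDerivAt_g₀₀ xs xq hz0).deriv]
      exact div_pos (hflux ▸ hmono hx hz0 hz.1) (by positivity)
    exact hinc (Set.left_mem_Icc.2 hgt.le) (Set.right_mem_Icc.2 hgt.le) hgt
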